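/- For every dimension d ∈ ℕ there exists a constant c_d > 0 with the following property: for every infinite sequence S in [0,1)^d one has ‖D_S^N | bmo^d‖ ≥ c_d · N^{−1} (log N)^{d/2} for infinitely many N ∈ ℕ. -/

import Mathlib

open MeasureTheory
open scoped ENNReal

noncomputable section

/-- The closed unit cube `[0,1]^d`. -/
def unitCube (d : ℕ) : Set (Fin d → ℝ) := Set.univ.pi fun _ => Set.Icc (0:ℝ) 1

/-- The half-open unit cube `[0,1)^d`. -/
def unitCubeIco (d : ℕ) : Set (Fin d → ℝ) := Set.univ.pi fun _ => Set.Ico (0:ℝ) 1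

/-- Discrepancy function of the first `N` points of the sequence `S` in `[0,1)^d`. -/
def discSeq (d : ℕ) (S : ℕ → Fin d → ℝ) (N : ℕ) (x : Fin d → ℝ) : ℝ :=
  (Nat.card {k : Fin N // ∀ i, S k i < x i} : ℝ) / N - ∏ i, x i

/-- One-dimensional Haar function `h_{j,m}`, with `h_{-1,0} = 1_{[0,1)}`. -/
def haar1 (j : ℤ) (m : ℕ) (x : ℝ) : ℝ :=
  if j = -1 then (if 0 ≤ x ∧ x < 1 then 1 else 0)
  else if (m:ℝ)/2^j.toNat ≤ x ∧ x < ((m:ℝ) + 1/2)/2^j.toNat then 1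
  else if ((m:ℝ) + 1/2)/2^j.toNat ≤ x ∧ x < ((m:ℝ)+1)/2^j.toNat then -1
  else 0

/-- `d`-dimensional (tensor product) Haar function. -/
def haarFn (d : ℕ) (j : Fin d → ℤ) (m : Fin d → ℕ) (x : Fin d → ℝ) : ℝ :=
  ∏ i, haar1 (j i) (m i) (x i)

/-- Haar coefficient `⟨f, h_{j,m}⟩`. -/
def haarCoeff (d : ℕ) (f : (Fin d → ℝ) → ℝ) (j : Fin d → ℤ) (m : Fin d → ℕ) : ℝ :=
  ∫ x in unitCube d, f x * haarFn d j m x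

/-- `|j| = max(j₁,0) + ⋯ + max(j_d,0)`. -/
def jnorm (d : ℕ) (j : Fin d → ℤ) : ℕ := ∑ i, (j i).toNat

/-- One-dimensional dyadic interval `I_{j,m}`. -/
def dyadicI (j : ℤ) (m : ℕ) : Set ℝ :=
  Set.Ico ((m:ℝ)/2^j.toNat) (((m:ℝ)+1)/2^j.toNat)

/-- `d`-dimensional dyadic box `I_{j,m}`. -/
def dyadicBox (d : ℕ) (j : Fin d → ℤ) (m : Fin d → ℕ) : Set (Fin d → ℝ) :=
  Set.univ.pi fun i => dyadicI (j i) (m i)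

/-- The index set `𝔻_j` as a finset. -/
def Dfin (d : ℕ) (j : Fin d → ℤ) : Finset (Fin d → ℕ) :=
  Fintype.piFinset fun i => Finset.range (2 ^ (j i).toNat)

/-- The index set `𝔻_j` for `j ∈ ℕ₀^d`. -/
def Dfin0 (d : ℕ) (j : Fin d → ℕ) : Finset (Fin d → ℕ) :=
  Fintype.piFinset fun i => Finset.range (2 ^ (j i))

/-- Coordinate of the `k`-th point of a digital sequence over `𝔽₂` with generating
matrix `C` (`0`-based rows and columns). -/
def digitalCoord (C : ℕ → ℕ → ZMod 2) (k : ℕ) : ℝ :=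
  ∑' i : ℕ,
    (((∑ ℓ ∈ Finset.range (k+1), C i ℓ * (if k.testBit ℓ then 1 else 0)).val : ℕ) : ℝ) / 2 ^ (i + 1)

/-- The digital sequence over `𝔽₂` generated by matrices `C 0, …, C (d-1)`. -/
def digitalSeq (d : ℕ) (C : Fin d → ℕ → ℕ → ZMod 2) : ℕ → Fin d → ℝ :=
  fun k j => digitalCoord (C j) k

/-- `C 0, …, C (d-1)` generate an order `α` digital `(t,n,d)`-net over `𝔽₂`,
where the relevant submatrices have `q` rows (`q ≥ αn`) and `n` columns.
Row indices are `0`-based; the `1`-based row value of row `r` is `r+1`. -/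
def IsOrderNet (α n t q d : ℕ) (C : Fin d → ℕ → ℕ → ZMod 2) : Prop :=
  ∀ (ν : Fin d → ℕ) (r : ∀ j : Fin d, Fin (ν j) → ℕ),
    (∀ j, StrictAnti (r j)) →
    (∀ j l, r j l < q) →
    (∑ j, ∑ l ∈ Finset.univ.filter (fun l : Fin (ν j) => (l:ℕ) < α), (r j l + 1)) ≤ α * n - t →
    LinearIndependent (ZMod 2)
      (fun p : Σ j : Fin d, Fin (ν j) => fun col : Fin n => C p.1 (r p.1 p.2) col)

/-- `C 0, …, C (d-1)` generate an order `α` digital `(t,d)`-sequence over `𝔽₂`. -/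
def IsOrderSeq (α t d : ℕ) (C : Fin d → ℕ → ℕ → ZMod 2) : Prop :=
  ∀ n : ℕ, t < α * n → IsOrderNet α n t (α * n) d C

/-- The condition `e_{i,k,ℓ} = 0` for all `k > 2ℓ` (in `1`-based indexing). -/
def Triangular2 (d : ℕ) (E : Fin d → ℕ → ℕ → ZMod 2) : Prop :=
  ∀ i k ℓ, 2 * (ℓ + 1) < k + 1 → E i k ℓ = 0

open scoped Classical in
/-- The quantity `λ(U)⁻¹ ∑_{j ∈ ℕ₀^d} 2^{|j|} ∑_{m : I_{j,m} ⊆ U} ⟨f,h_{j,m}⟩²`. -/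
def bmoSq (d : ℕ) (f : (Fin d → ℝ) → ℝ) (U : Set (Fin d → ℝ)) : ℝ≥0∞ :=
  (volume U)⁻¹ * ∑' j : Fin d → ℕ, ∑ m ∈ Dfin0 d j,
    if dyadicBox d (fun i => (j i : ℤ)) m ⊆ U then
      (2:ℝ≥0∞) ^ (∑ i, j i) * ENNReal.ofReal ((haarCoeff d f (fun i => (j i : ℤ)) m)^2)
    else 0

/-- The BMO (semi-)norm `‖f | bmo^d‖`. -/
def bmoNorm (d : ℕ) (f : (Fin d → ℝ) → ℝ) : ℝ≥0∞ :=
  (⨆ U : {U : Set (Fin d → ℝ) // MeasurableSet U ∧ U ⊆ unitCubeIco d ∧ 0 < volume U},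
    bmoSq d f U.1) ^ (1/2 : ℝ)

/-- The Orlicz norm of `f` on `[0,1)^d` with respect to the Young function `ψ`,
with the convention `inf ∅ = ∞`. -/
def orliczNorm (d : ℕ) (ψ : ℝ → ℝ) (f : (Fin d → ℝ) → ℝ) : ℝ≥0∞ :=
  ⨅ K : {K : ℝ // 0 < K ∧ ∫ x in unitCubeIco d, ψ (|f x| / K) ≤ 1}, ENNReal.ofReal K.1

/-- `ψ` is a Young function which coincides with `exp(x^β) - 1` for all large `x`. -/
def IsYoungExp (β : ℝ) (ψ : ℝ → ℝ) : Prop :=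
  ConvexOn ℝ (Set.Ici 0) ψ ∧ ψ 0 = 0 ∧ (∀ x : ℝ, 0 < x → 0 < ψ x) ∧
    ∃ x₀ : ℝ, ∀ x ≥ x₀, ψ x = Real.exp (x ^ β) - 1

/-- The set of valid Haar indices `j ∈ ℕ_{-1}^d`. -/
def validJ (d : ℕ) : Set (Fin d → ℤ) := {j | ∀ i, -1 ≤ j i}

/-- The `q`-th power of the Haar-characterization of the `S^s_{p,q}B` norm:
`∑_{j ∈ ℕ_{-1}^d} 2^{|j|(s-1/p+1)q} (∑_{m ∈ 𝔻_j} |⟨f,h_{j,m}⟩|^p)^{q/p}`. -/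
def besovSum (d : ℕ) (p q s : ℝ) (f : (Fin d → ℝ) → ℝ) : ℝ≥0∞ :=
  ∑' j : validJ d,
    ENNReal.ofReal ((2:ℝ) ^ ((jnorm d j.1 : ℝ) * (s - 1/p + 1) * q) *
      (∑ m ∈ Dfin d j.1, |haarCoeff d f j.1 m| ^ p) ^ (q / p))

/-- Coordinate of the `k`-th point of a digital net with `q × n` generating matrix `C`. -/
def netCoord (q n : ℕ) (C : ℕ → ℕ → ZMod 2) (k : ℕ) : ℝ :=
  ∑ i ∈ Finset.range q,
    ((∑ ℓ ∈ Finset.range n, C i ℓ * (if k.testBit ℓ then 1 else 0)).val : ℝ) / 2 ^ (i + 1)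

/-- `n_{μ+1}`, with the convention `n_{r+1} = log₂ N` (indices `1`-based, `n` stored `0`-based). -/
def nExt (r : ℕ) (n : Fin r → ℕ) (N : ℕ) (μ : ℕ) : ℝ :=
  if h : μ < r then (n ⟨μ, h⟩ : ℝ) else Real.logb 2 N

/-- `n_μ`, with the convention `n_0 = 0` (indices `1`-based, `n` stored `0`-based). -/
def nPrev (r : ℕ) (n : Fin r → ℕ) (μ : ℕ) : ℝ :=
  if h : 1 ≤ μ ∧ μ ≤ r then (n ⟨μ - 1, by omega⟩ : ℝ) else 0

/-- The dyadic square function `Sf`, valued in `ℝ≥0∞`. -/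
def sqFnE (d : ℕ) (f : (Fin d → ℝ) → ℝ) (x : Fin d → ℝ) : ℝ≥0∞ :=
  (∑' j : validJ d, ∑ m ∈ Dfin d j.1,
    ENNReal.ofReal ((2:ℝ) ^ (2 * jnorm d j.1) * (haarCoeff d f j.1 m)^2 *
      (dyadicBox d j.1 m).indicator (fun _ => (1:ℝ)) x)) ^ (1/2 : ℝ)

/-- `sup_{p > 1} p^{-1/β} ‖f‖_{L_p([0,1]^d)}`. -/
def supLp (d : ℕ) (β : ℝ) (f : (Fin d → ℝ) → ℝ) : ℝ≥0∞ :=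
  ⨆ p : {p : ℝ // 1 < p},
    ENNReal.ofReal ((p:ℝ) ^ (-(1/β))) * eLpNorm f (ENNReal.ofReal (p:ℝ)) (volume.restrict (unitCube d))

/-- `‖f | 𝒟₀^d‖² = ∑_{j ∈ ℕ₀^d} 2^{|j|} ∑_{m ∈ 𝔻_j} ⟨f,h_{j,m}⟩²`. -/
def dNormSq (d : ℕ) (f : (Fin d → ℝ) → ℝ) : ℝ≥0∞ :=
  ∑' j : Fin d → ℕ, ∑ m ∈ Dfin0 d j,
    ENNReal.ofReal ((2:ℝ) ^ (∑ i, j i) * (haarCoeff d f (fun i => (j i : ℤ)) m)^2)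

/-- `‖f | 𝒟₀^d‖`. -/
def dNorm (d : ℕ) (f : (Fin d → ℝ) → ℝ) : ℝ≥0∞ := (dNormSq d f) ^ (1/2 : ℝ)


/-!
The argument is Roth's pigeonhole argument, applied to two initial segments of the sequence at once.
Fix a level `j ∈ ℕ₀^d` and put `h = 2 ^ (|j| - 1)`. Between the times `N` and `N + h` only `h` points
are added, so at least half of the `2 ^ |j|` dyadic boxes of level `j` receive none of them. On such
a box the Haar coefficient of the unnormalised discrepancy `N D_N` changes exactly by `h` times the
Haar coefficient of the volume, hence it is large at time `N` or at time `N + h`; summing over the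
boxes, level `j` contributes at least a constant to the sum of the energies of `N D_N` and
`(N + h) D_{N + h}`. Averaging over `M ≤ N < 3 M` with `M = 2 ^ (d K)` and over the `K ^ d` levels
`j ∈ {1, …, K}^d` gives an `N` at which the total energy is of order `K ^ d`, that is of order
`(log N) ^ d`. This bounds the BMO seminorm from below already through the set `U = [0,1)^d`.
-/

/-! ### One-dimensional Haar functions -/

lemma mem_dyadicI_natCast {j m : ℕ} {x : ℝ} :
    x ∈ dyadicI j m ↔ (m : ℝ) ≤ x * 2 ^ j ∧ x * 2 ^ j < m + 1 := by
  have h2j : (0 : ℝ) < 2 ^ j := by positivity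
  rw [dyadicI, Set.mem_Ico, Int.toNat_natCast, div_le_iff₀ h2j, lt_div_iff₀ h2j]

lemma dyadicI_natCast_subset_Ico {j m : ℕ} (hm : m < 2 ^ j) :
    dyadicI j m ⊆ Set.Ico 0 1 := by
  have hm' : (m : ℝ) + 1 ≤ 2 ^ j := by exact_mod_cast hm
  rw [dyadicI, Int.toNat_natCast]
  exact Set.Ico_subset_Ico (by positivity) (by rwa [div_le_one (by positivity)])

lemma dyadic_midpoint_mem_Icc (j m : ℕ) :
    ((m + 1 / 2) / 2 ^ j : ℝ) ∈ Set.Icc ((m : ℝ) / 2 ^ j) ((m + 1) / 2 ^ j) :=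
  ⟨by gcongr; linarith, by gcongr; norm_num⟩

lemma haar1_natCast (j m : ℕ) (x : ℝ) :
    haar1 j m x =
      (Set.Ico ((m : ℝ) / 2 ^ j) ((m + 1 / 2) / 2 ^ j)).indicator 1 x
        - (Set.Ico (((m : ℝ) + 1 / 2) / 2 ^ j) ((m + 1) / 2 ^ j)).indicator 1 x := by
  have hj : (j : ℤ) ≠ -1 := by omega
  simp only [haar1, if_neg hj, Int.toNat_natCast, Set.indicator, Set.mem_Ico, Pi.one_apply]
  split_ifs with hleft hright <;> first | linarith [hleft.2, hright.1] | norm_num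

lemma haar1_natCast_of_notMem {j m : ℕ} {x : ℝ} (hx : x ∉ dyadicI j m) : haar1 j m x = 0 := by
  obtain ⟨hleft, hright⟩ := dyadic_midpoint_mem_Icc j m
  rw [dyadicI, Int.toNat_natCast] at hx
  rw [haar1_natCast, Set.indicator_of_notMem fun h => hx (Set.Ico_subset_Ico_right hright h),
    Set.indicator_of_notMem fun h => hx (Set.Ico_subset_Ico_left hleft h), sub_zero]

lemma measurable_haar1 (j : ℤ) (m : ℕ) : Measurable (haar1 j m) := by
  unfold haar1
  refine Measurable.ite (.const _) (Measurable.ite measurableSet_Ico ?_ ?_)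
    (Measurable.ite measurableSet_Ico ?_ (Measurable.ite measurableSet_Ico ?_ ?_))
  all_goals exact measurable_const

lemma abs_haar1_le_one (j : ℤ) (m : ℕ) (x : ℝ) : |haar1 j m x| ≤ 1 := by
  unfold haar1
  split_ifs <;> norm_num

lemma integrable_mul_haar1 {μ : Measure ℝ} {f : ℝ → ℝ} (hf : Integrable f μ) (j : ℤ) (m : ℕ) :
    Integrable (fun x => f x * haar1 j m x) μ :=
  hf.mul_bdd (measurable_haar1 j m).aestronglyMeasurable
    (Filter.Eventually.of_forall (abs_haar1_le_one j m))

lemma setIntegral_indicator_Ico {E : Type*} [NormedAddCommGroup E] [NormedSpace ℝ E] {f : ℝ → E}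
    {s : Set ℝ} {a b : ℝ} (hab : a ≤ b) (hs : Set.Ico a b ⊆ s) :
    ∫ x in s, (Set.Ico a b).indicator f x = ∫ x in a..b, f x := by
  rw [setIntegral_indicator measurableSet_Ico, Set.inter_eq_right.mpr hs,
    intervalIntegral.integral_of_le hab, integral_Ico_eq_integral_Ioc]

lemma integral_mul_haar1 {j m : ℕ} (hm : m < 2 ^ j) {f : ℝ → ℝ}
    (hf : IntegrableOn f (Set.Icc 0 1)) :
    ∫ x in Set.Icc (0 : ℝ) 1, f x * haar1 j m x =
      (∫ x in (m / 2 ^ j : ℝ)..((m + 1 / 2) / 2 ^ j), f x)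
        - ∫ x in ((m + 1 / 2) / 2 ^ j : ℝ)..((m + 1) / 2 ^ j), f x := by
  obtain ⟨hleft, hright⟩ := dyadic_midpoint_mem_Icc j m
  have hsub : Set.Ico ((m : ℝ) / 2 ^ j) ((m + 1) / 2 ^ j) ⊆ Set.Icc 0 1 := by
    simpa only [dyadicI, Int.toNat_natCast] using
      (dyadicI_natCast_subset_Ico hm).trans Set.Ico_subset_Icc_self
  rw [← setIntegral_indicator_Ico hleft ((Set.Ico_subset_Ico_right hright).trans hsub),
    ← setIntegral_indicator_Ico hright ((Set.Ico_subset_Ico_left hleft).trans hsub),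
    ← integral_sub (hf.indicator measurableSet_Ico) (hf.indicator measurableSet_Ico)]
  congr 1 with x
  simp only [haar1_natCast, mul_sub, ← Set.indicator_mul_right, Pi.one_apply, mul_one]

lemma integral_haar1 {j m : ℕ} (hm : m < 2 ^ j) :
    ∫ x in Set.Icc (0 : ℝ) 1, haar1 j m x = 0 := by
  have h := integral_mul_haar1 hm (f := fun _ => 1) (integrable_const 1)
  simp only [one_mul, intervalIntegral.integral_const, smul_eq_mul] at h
  rw [h]
  ring

lemma integral_id_mul_haar1 {j m : ℕ} (hm : m < 2 ^ j) :
    ∫ x in Set.Icc (0 : ℝ) 1, x * haar1 j m x = -(1 / 4 ^ (j + 1)) := by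
  have h4 : (4 : ℝ) ^ (j + 1) = 4 * (2 ^ j) ^ 2 := by
    rw [pow_succ, ← pow_mul, mul_comm j, pow_mul]
    norm_num [mul_comm]
  rw [integral_mul_haar1 hm continuous_id'.integrableOn_Icc, integral_id, integral_id, h4]
  field_simp
  ring

lemma integral_indicator_Ioi_mul_haar1_eq_zero {j m : ℕ} (hm : m < 2 ^ j) {z : ℝ}
    (hz : z ∉ dyadicI j m) :
    ∫ x in Set.Icc (0 : ℝ) 1, (Set.Ioi z).indicator 1 x * haar1 j m x = 0 := by
  rw [dyadicI, Set.mem_Ico, not_and_or, not_le, not_lt] at hz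
  rcases hz with hleft | hright
  · have hone (x : ℝ) : (Set.Ioi z).indicator 1 x * haar1 j m x = haar1 j m x := by
      by_cases hx : x ∈ dyadicI j m
      · have hzx : x ∈ Set.Ioi z := hleft.trans_le hx.1
        rw [Set.indicator_of_mem hzx, Pi.one_apply, one_mul]
      · rw [haar1_natCast_of_notMem hx, mul_zero]
    simp only [hone, integral_haar1 hm]
  · have hzero (x : ℝ) : (Set.Ioi z).indicator 1 x * haar1 j m x = 0 := by
      by_cases hx : x ∈ dyadicI j m
      · have hxz : x ∉ Set.Ioi z := (hx.2.trans_le hright).not_gt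
        rw [Set.indicator_of_notMem hxz, zero_mul]
      · rw [haar1_natCast_of_notMem hx, mul_zero]
    simp only [hzero, integral_zero]

/-! ### Haar coefficients of tensor products -/

lemma volume_restrict_unitCube (d : ℕ) :
    (volume : Measure (Fin d → ℝ)).restrict (unitCube d) =
      Measure.pi fun _ => volume.restrict (Set.Icc (0 : ℝ) 1) := by
  rw [unitCube, volume_pi, Measure.restrict_pi_pi]

section Tensor

variable {d : ℕ}

lemma haarCoeff_tensor (f : Fin d → ℝ → ℝ) (j : Fin d → ℤ) (m : Fin d → ℕ) :
    haarCoeff d (fun x => ∏ i, f i (x i)) j m =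
      ∏ i, ∫ x in Set.Icc (0 : ℝ) 1, f i x * haar1 (j i) (m i) x := by
  simp only [haarCoeff, haarFn, ← Finset.prod_mul_distrib, volume_restrict_unitCube]
  exact integral_fintype_prod_eq_prod fun i x => f i x * haar1 (j i) (m i) x

lemma integrableOn_tensor_mul_haarFn {f : Fin d → ℝ → ℝ}
    (hf : ∀ i, IntegrableOn (f i) (Set.Icc 0 1)) (j : Fin d → ℤ) (m : Fin d → ℕ) :
    IntegrableOn (fun x => (∏ i, f i (x i)) * haarFn d j m x) (unitCube d) := by
  simp only [haarFn, ← Finset.prod_mul_distrib, IntegrableOn, volume_restrict_unitCube]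
  exact Integrable.fintype_prod (f := fun i x => f i x * haar1 (j i) (m i) x)
    fun i => integrable_mul_haar1 (hf i) (j i) (m i)

lemma mem_Dfin0 {j m : Fin d → ℕ} : m ∈ Dfin0 d j ↔ ∀ i, m i < 2 ^ j i := by
  simp [Dfin0]

lemma card_Dfin0 (j : Fin d → ℕ) : (Dfin0 d j).card = 2 ^ ∑ i, j i := by
  simp [Dfin0, Finset.prod_pow_eq_pow_sum]

lemma haarCoeff_prod_coord {j m : Fin d → ℕ} (hm : m ∈ Dfin0 d j) :
    haarCoeff d (fun x => ∏ i, x i) (fun i => j i) m = ∏ i, -(1 / 4 ^ (j i + 1)) := by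
  rw [haarCoeff_tensor fun _ x => x]
  exact Finset.prod_congr rfl fun i _ => integral_id_mul_haar1 (mem_Dfin0.1 hm i)

lemma haarCoeff_prod_coord_sq {j m : Fin d → ℕ} (hm : m ∈ Dfin0 d j) :
    haarCoeff d (fun x => ∏ i, x i) (fun i => j i) m ^ 2 =
      1 / (16 ^ d * (2 ^ ∑ i, j i) ^ 4) := by
  have hfactor (n : ℕ) : (-(1 / (4 : ℝ) ^ (n + 1))) ^ 2 = 1 / (16 * (2 ^ n) ^ 4) := by
    rw [← pow_mul 2, mul_comm n, pow_mul 2, neg_sq, div_pow, one_pow, ← pow_mul 4, mul_comm (n + 1),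
      pow_mul 4, pow_succ' _ n]
    norm_num
  simp only [haarCoeff_prod_coord hm, ← Finset.prod_pow, hfactor, Finset.prod_div_distrib,
    Finset.prod_mul_distrib]
  simp [Finset.prod_pow, Finset.prod_pow_eq_pow_sum]

/-- The function `x ↦ 1_{[0,x)}(z)`, the contribution of a point `z` to the counting part of the
discrepancy function. It is written as a product so that its Haar coefficients factor. As in
`discSeq`, the box `[0,x)` is encoded as `∏ i, (-∞, x i)`. -/
def cornerIndicator (z x : Fin d → ℝ) : ℝ := ∏ i, (Set.Ioi (z i)).indicator 1 (x i)

lemma cornerIndicator_eq_ite (z x : Fin d → ℝ) [Decidable (∀ i, z i < x i)] :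
    cornerIndicator z x = if ∀ i, z i < x i then 1 else 0 := by
  simp [cornerIndicator, Set.indicator_apply, Finset.prod_ite_zero]

lemma haarCoeff_cornerIndicator_eq_zero {j m : Fin d → ℕ} (hm : m ∈ Dfin0 d j) {z : Fin d → ℝ}
    (hz : z ∉ dyadicBox d (fun i => j i) m) :
    haarCoeff d (cornerIndicator z) (fun i => j i) m = 0 := by
  obtain ⟨i, hi⟩ : ∃ i, z i ∉ dyadicI (j i) (m i) := by
    simpa only [dyadicBox, Set.mem_univ_pi, not_forall] using hz
  unfold cornerIndicator
  rw [haarCoeff_tensor fun i => (Set.Ioi (z i)).indicator 1]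
  exact Finset.prod_eq_zero (Finset.mem_univ i)
    (integral_indicator_Ioi_mul_haar1_eq_zero (mem_Dfin0.1 hm i) hi)

end Tensor

/-! ### Haar coefficients of the discrepancy function -/

section Discrepancy

variable {d : ℕ} (S : ℕ → Fin d → ℝ)

lemma natCast_mul_discSeq (N : ℕ) (x : Fin d → ℝ) :
    N * discSeq d S N x = ∑ k ∈ Finset.range N, cornerIndicator (S k) x - N * ∏ i, x i := by
  classical
  have hcount : (Nat.card {k : Fin N // ∀ i, S k i < x i} : ℝ) =
      ∑ k ∈ Finset.range N, cornerIndicator (S k) x := by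
    simp only [Nat.card_eq_fintype_card, Fintype.card_subtype, Finset.card_filter,
      Finset.sum_range, cornerIndicator_eq_ite]
    push_cast
    rfl
  rcases eq_or_ne N 0 with rfl | hN
  · simp
  · rw [discSeq, hcount]
    field_simp

lemma natCast_mul_haarCoeff_discSeq (N : ℕ) (j : Fin d → ℤ) (m : Fin d → ℕ) :
    N * haarCoeff d (discSeq d S N) j m =
      ∑ k ∈ Finset.range N, haarCoeff d (cornerIndicator (S k)) j m
        - N * haarCoeff d (fun x => ∏ i, x i) j m := by
  have hcorner (k : ℕ) :
      IntegrableOn (fun x => cornerIndicator (S k) x * haarFn d j m x) (unitCube d) :=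
    integrableOn_tensor_mul_haarFn
      (fun _ => (integrableOn_const (by simp)).indicator measurableSet_Ioi) j m
  have hvolume : IntegrableOn (fun x => (∏ i, x i) * haarFn d j m x) (unitCube d) :=
    integrableOn_tensor_mul_haarFn (fun _ => continuous_id'.integrableOn_Icc) j m
  simp only [haarCoeff]
  rw [← integral_const_mul, ← integral_const_mul, ← integral_finsetSum _ fun k _ => hcorner k,
    ← integral_sub (integrable_finsetSum _ fun k _ => hcorner k) (hvolume.const_mul _)]
  congr 1 with x
  rw [← mul_assoc, natCast_mul_discSeq, sub_mul, Finset.sum_mul, mul_assoc]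

lemma natCast_mul_haarCoeff_discSeq_add {j m : Fin d → ℕ} (hm : m ∈ Dfin0 d j) {N h : ℕ}
    (hempty : ∀ k ∈ Finset.Ico N (N + h), S k ∉ dyadicBox d (fun i => j i) m) :
    (N + h : ℕ) * haarCoeff d (discSeq d S (N + h)) (fun i => j i) m =
      N * haarCoeff d (discSeq d S N) (fun i => j i) m
        - h * haarCoeff d (fun x => ∏ i, x i) (fun i => j i) m := by
  have hnew :
      ∑ k ∈ Finset.Ico N (N + h), haarCoeff d (cornerIndicator (S k)) (fun i => j i) m = 0 :=
    Finset.sum_eq_zero fun k hk => haarCoeff_cornerIndicator_eq_zero hm (hempty k hk)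
  rw [natCast_mul_haarCoeff_discSeq, natCast_mul_haarCoeff_discSeq,
    ← Finset.sum_range_add_sum_Ico _ (Nat.le_add_right N h), hnew]
  push_cast
  ring

lemma le_sq_haarCoeff_discSeq_add {j m : Fin d → ℕ} (hm : m ∈ Dfin0 d j) {N h : ℕ}
    (hempty : ∀ k ∈ Finset.Ico N (N + h), S k ∉ dyadicBox d (fun i => j i) m) :
    h ^ 2 / (2 * 16 ^ d * (2 ^ ∑ i, j i) ^ 4) ≤
      (N * haarCoeff d (discSeq d S N) (fun i => j i) m) ^ 2
        + ((N + h : ℕ) * haarCoeff d (discSeq d S (N + h)) (fun i => j i) m) ^ 2 := by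
  rw [natCast_mul_haarCoeff_discSeq_add S hm hempty]
  set a := N * haarCoeff d (discSeq d S N) (fun i => j i) m
  set v := haarCoeff d (fun x => ∏ i, x i) (fun i => j i) m with hv
  calc (h : ℝ) ^ 2 / (2 * 16 ^ d * (2 ^ ∑ i, j i) ^ 4) = (h * v) ^ 2 / 2 := by
        rw [mul_pow, hv, haarCoeff_prod_coord_sq hm]
        field_simp
    _ ≤ a ^ 2 + (a - h * v) ^ 2 := by linarith [sq_nonneg (2 * a - h * v)]

end Discrepancy

/-! ### Energy of a dyadic level -/

/-- The contribution `2^{|j|} ∑_{m ∈ 𝔻_j} ⟨f, h_{j,m}⟩²` of the level `j ∈ ℕ₀^d` to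
`‖f | 𝒟₀^d‖²`. -/
def levelEnergy (d : ℕ) (f : (Fin d → ℝ) → ℝ) (j : Fin d → ℕ) : ℝ :=
  2 ^ (∑ i, j i) * ∑ m ∈ Dfin0 d j, haarCoeff d f (fun i => j i) m ^ 2

section Level

variable {d : ℕ}

lemma levelEnergy_nonneg (f : (Fin d → ℝ) → ℝ) (j : Fin d → ℕ) : 0 ≤ levelEnergy d f j := by
  unfold levelEnergy
  positivity

lemma sq_mul_levelEnergy (c : ℝ) (f : (Fin d → ℝ) → ℝ) (j : Fin d → ℕ) :
    c ^ 2 * levelEnergy d f j =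
      2 ^ (∑ i, j i) * ∑ m ∈ Dfin0 d j, (c * haarCoeff d f (fun i => j i) m) ^ 2 := by
  simp only [levelEnergy, mul_pow, ← Finset.mul_sum]
  ring

lemma eq_floor_of_mem_dyadicBox {j m : Fin d → ℕ} {x : Fin d → ℝ}
    (hx : x ∈ dyadicBox d (fun i => j i) m) : m = fun i => ⌊x i * 2 ^ j i⌋₊ := by
  ext i
  obtain ⟨hlower, hupper⟩ := mem_dyadicI_natCast.1 (hx i (Set.mem_univ i))
  exact ((Nat.floor_eq_iff ((Nat.cast_nonneg _).trans hlower)).2 ⟨hlower, hupper⟩).symm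

open scoped Classical in
lemma two_pow_le_card_add_card_empty_dyadicBox {ι : Type*} (j : Fin d → ℕ) (T : Finset ι)
    (x : ι → Fin d → ℝ) :
    2 ^ (∑ i, j i) ≤
      T.card + ((Dfin0 d j).filter fun m => ∀ k ∈ T, x k ∉ dyadicBox d (fun i => j i) m).card := by
  have hocc : (Dfin0 d j).filter (fun m => ¬ ∀ k ∈ T, x k ∉ dyadicBox d (fun i => j i) m) ⊆
      T.image fun k i => ⌊x k i * 2 ^ j i⌋₊ := by
    intro m hm
    obtain ⟨k, hk, hkm⟩ : ∃ k ∈ T, x k ∈ dyadicBox d (fun i => j i) m := by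
      simpa only [not_forall, not_not, exists_prop] using (Finset.mem_filter.1 hm).2
    exact Finset.mem_image.2 ⟨k, hk, (eq_floor_of_mem_dyadicBox hkm).symm⟩
  have hocc_card := (Finset.card_le_card hocc).trans Finset.card_image_le
  rw [← card_Dfin0, ← Finset.card_filter_add_card_filter_not
    (fun m => ∀ k ∈ T, x k ∉ dyadicBox d (fun i => j i) m)]
  omega

lemma le_levelEnergy_discSeq_add (S : ℕ → Fin d → ℝ) (j : Fin d → ℕ) (N h : ℕ) :
    ((2 : ℝ) ^ (∑ i, j i) - h) * h ^ 2 / (2 * 16 ^ d * (2 ^ ∑ i, j i) ^ 3) ≤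
      N ^ 2 * levelEnergy d (discSeq d S N) j
        + (N + h : ℕ) ^ 2 * levelEnergy d (discSeq d S (N + h)) j := by
  classical
  set E := (Dfin0 d j).filter fun m =>
    ∀ k ∈ Finset.Ico N (N + h), S k ∉ dyadicBox d (fun i => j i) m
  have hcard : (2 : ℝ) ^ (∑ i, j i) - h ≤ E.card := by
    have := two_pow_le_card_add_card_empty_dyadicBox j (Finset.Ico N (N + h)) S
    rw [Nat.card_Ico, Nat.add_sub_cancel_left] at this
    rw [sub_le_iff_le_add']
    exact_mod_cast this
  set A : (Fin d → ℕ) → ℝ := fun m =>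
    (N * haarCoeff d (discSeq d S N) (fun i => j i) m) ^ 2
      + ((N + h : ℕ) * haarCoeff d (discSeq d S (N + h)) (fun i => j i) m) ^ 2
  set v : ℝ := h ^ 2 / (2 * 16 ^ d * (2 ^ ∑ i, j i) ^ 4) with hv
  have hsum : ((2 : ℝ) ^ (∑ i, j i) - h) * v ≤ ∑ m ∈ Dfin0 d j, A m :=
    calc ((2 : ℝ) ^ (∑ i, j i) - h) * v
        ≤ E.card * v := by gcongr
      _ = ∑ _ ∈ E, v := by rw [Finset.sum_const, nsmul_eq_mul]
      _ ≤ ∑ m ∈ E, A m := Finset.sum_le_sum fun m hm =>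
        le_sq_haarCoeff_discSeq_add S (Finset.mem_filter.1 hm).1 (Finset.mem_filter.1 hm).2
      _ ≤ ∑ m ∈ Dfin0 d j, A m :=
        Finset.sum_le_sum_of_subset_of_nonneg (Finset.filter_subset _ _) fun _ _ _ => by positivity
  calc ((2 : ℝ) ^ (∑ i, j i) - h) * h ^ 2 / (2 * 16 ^ d * (2 ^ ∑ i, j i) ^ 3)
      = 2 ^ (∑ i, j i) * (((2 : ℝ) ^ (∑ i, j i) - h) * v) := by rw [hv]; field_simp
    _ ≤ 2 ^ (∑ i, j i) * ∑ m ∈ Dfin0 d j, A m := by gcongr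
    _ = _ := by rw [sq_mul_levelEnergy, sq_mul_levelEnergy, ← mul_add, ← Finset.sum_add_distrib]

lemma one_div_le_levelEnergy_discSeq_add (S : ℕ → Fin d → ℝ) {j : Fin d → ℕ} {s : ℕ}
    (hj : ∑ i, j i = s + 1) (N : ℕ) :
    1 / 16 ^ (d + 1) ≤ N ^ 2 * levelEnergy d (discSeq d S N) j
      + (N + 2 ^ s : ℕ) ^ 2 * levelEnergy d (discSeq d S (N + 2 ^ s)) j := by
  refine le_of_eq_of_le ?_ (le_levelEnergy_discSeq_add S j N (2 ^ s))
  rw [hj, pow_succ (16 : ℝ), pow_succ (2 : ℝ)]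
  push_cast
  field_simp
  norm_num

end Level

/-! ### Averaging over the number of points -/

lemma mul_le_two_mul_sum_Ico_of_le_add {b : ℕ → ℝ} (hb : ∀ N, 0 ≤ b N) {a : ℝ} {h M : ℕ}
    (hhM : h ≤ M) (hab : ∀ N, a ≤ b N + b (N + h)) :
    M * a ≤ 2 * ∑ N ∈ Finset.Ico M (3 * M), b N := by
  have hle (p q : ℕ) (hp : M ≤ p) (hq : q ≤ 3 * M) :
      ∑ N ∈ Finset.Ico p q, b N ≤ ∑ N ∈ Finset.Ico M (3 * M), b N :=
    Finset.sum_le_sum_of_subset_of_nonneg (Finset.Ico_subset_Ico hp hq) fun N _ _ => hb N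
  calc M * a = ∑ _ ∈ Finset.Ico M (2 * M), a := by
        rw [Finset.sum_const, Nat.card_Ico, nsmul_eq_mul, two_mul, Nat.add_sub_cancel]
    _ ≤ ∑ N ∈ Finset.Ico M (2 * M), (b N + b (N + h)) := Finset.sum_le_sum fun N _ => hab N
    _ = ∑ N ∈ Finset.Ico M (2 * M), b N + ∑ N ∈ Finset.Ico (M + h) (2 * M + h), b N := by
        rw [Finset.sum_add_distrib, Finset.sum_Ico_add' b]
    _ ≤ 2 * ∑ N ∈ Finset.Ico M (3 * M), b N := by
        linarith [hle M (2 * M) le_rfl (by omega),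
          hle (M + h) (2 * M + h) (by omega) (by omega)]

lemma exists_card_mul_le_sum_of_le_add {ι : Type*} {J : Finset ι} {b : ι → ℕ → ℝ}
    (hb : ∀ j ∈ J, ∀ N, 0 ≤ b j N) {a : ℝ} {M : ℕ} (hM : 0 < M)
    (hab : ∀ j ∈ J, ∃ h ≤ M, ∀ N, a ≤ b j N + b j (N + h)) :
    ∃ N ∈ Finset.Ico M (3 * M), J.card * a / 4 ≤ ∑ j ∈ J, b j N := by
  have hlevel : ∀ j ∈ J, M * a / 2 ≤ ∑ N ∈ Finset.Ico M (3 * M), b j N := fun j hj => by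
    obtain ⟨h, hhM, hle⟩ := hab j hj
    linarith [mul_le_two_mul_sum_Ico_of_le_add (hb j hj) hhM hle]
  refine Finset.exists_le_of_sum_le (Finset.nonempty_Ico.2 (by omega)) ?_
  calc ∑ _ ∈ Finset.Ico M (3 * M), J.card * a / 4 = ∑ _ ∈ J, M * a / 2 := by
        have hlen : 3 * M - M = 2 * M := by omega
        simp only [Finset.sum_const, Nat.card_Ico, hlen, nsmul_eq_mul]
        push_cast
        ring
    _ ≤ ∑ j ∈ J, ∑ N ∈ Finset.Ico M (3 * M), b j N := Finset.sum_le_sum hlevel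
    _ = ∑ N ∈ Finset.Ico M (3 * M), ∑ j ∈ J, b j N := Finset.sum_comm

lemma exists_le_sum_levelEnergy_discSeq {d : ℕ} (hd : 0 < d) (S : ℕ → Fin d → ℝ) (K : ℕ) :
    ∃ N ∈ Finset.Ico (2 ^ (d * K)) (3 * 2 ^ (d * K)),
      (K : ℝ) ^ d / (4 * 16 ^ (d + 1)) ≤
        N ^ 2 * ∑ j ∈ Fintype.piFinset fun _ : Fin d => Finset.Icc 1 K,
          levelEnergy d (discSeq d S N) j := by
  obtain ⟨N, hN, hle⟩ := exists_card_mul_le_sum_of_le_add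
    (J := Fintype.piFinset fun _ : Fin d => Finset.Icc 1 K) (a := 1 / 16 ^ (d + 1))
    (b := fun j N => N ^ 2 * levelEnergy d (discSeq d S N) j)
    (fun j _ N => mul_nonneg (sq_nonneg _) (levelEnergy_nonneg _ j)) (Nat.two_pow_pos (d * K))
    fun j hj => by
      have hjK (i : Fin d) : 1 ≤ j i ∧ j i ≤ K := Finset.mem_Icc.1 (Fintype.mem_piFinset.1 hj i)
      have hpos : 0 < ∑ i, j i :=
        Finset.sum_pos (fun i _ => (hjK i).1) ⟨⟨0, hd⟩, Finset.mem_univ _⟩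
      have hle : ∑ i, j i ≤ d * K :=
        (Finset.sum_le_card_nsmul _ _ K fun i _ => (hjK i).2).trans_eq (by simp)
      obtain ⟨s, hs⟩ := Nat.exists_eq_add_one_of_ne_zero hpos.ne'
      exact ⟨2 ^ s, Nat.pow_le_pow_right two_pos (by omega),
        one_div_le_levelEnergy_discSeq_add S hs⟩
  refine ⟨N, hN, ?_⟩
  rw [Finset.mul_sum]
  refine le_of_eq_of_le ?_ hle
  rw [Fintype.card_piFinset_const, Nat.card_Icc, Nat.add_sub_cancel]
  push_cast
  field_simp

/-! ### Lower bounds for the norms -/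

lemma volume_unitCubeIco (d : ℕ) : volume (unitCubeIco d) = 1 := by
  simp [unitCubeIco, volume_pi_pi]

section Norms

variable {d : ℕ}

lemma dyadicBox_subset_unitCubeIco {j m : Fin d → ℕ} (hm : m ∈ Dfin0 d j) :
    dyadicBox d (fun i => j i) m ⊆ unitCubeIco d :=
  Set.pi_mono fun i _ => dyadicI_natCast_subset_Ico (mem_Dfin0.1 hm i)

lemma bmoSq_unitCubeIco (f : (Fin d → ℝ) → ℝ) : bmoSq d f (unitCubeIco d) = dNormSq d f := by
  rw [bmoSq, dNormSq, volume_unitCubeIco, inv_one, one_mul]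
  refine tsum_congr fun j => Finset.sum_congr rfl fun m hm => ?_
  rw [if_pos (dyadicBox_subset_unitCubeIco hm), ENNReal.ofReal_mul (by positivity),
    ENNReal.ofReal_pow zero_le_two, ENNReal.ofReal_ofNat]

lemma dNorm_le_bmoNorm (f : (Fin d → ℝ) → ℝ) : dNorm d f ≤ bmoNorm d f := by
  rw [dNorm, ← bmoSq_unitCubeIco]
  refine ENNReal.rpow_le_rpow
    (le_iSup_of_le ⟨unitCubeIco d, ?_, subset_rfl, ?_⟩ le_rfl) (by norm_num)
  · exact MeasurableSet.univ_pi fun _ => measurableSet_Ico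
  · rw [volume_unitCubeIco]
    exact one_pos

lemma ofReal_sum_levelEnergy_le_dNormSq (f : (Fin d → ℝ) → ℝ) (J : Finset (Fin d → ℕ)) :
    ENNReal.ofReal (∑ j ∈ J, levelEnergy d f j) ≤ dNormSq d f := by
  refine le_of_eq_of_le ?_ (ENNReal.sum_le_tsum J)
  rw [ENNReal.ofReal_sum_of_nonneg fun j _ => levelEnergy_nonneg f j]
  refine Finset.sum_congr rfl fun j _ => ?_
  rw [levelEnergy, Finset.mul_sum, ENNReal.ofReal_sum_of_nonneg fun _ _ => by positivity]

lemma ofReal_sqrt_le_dNorm {f : (Fin d → ℝ) → ℝ} {a : ℝ} (ha : 0 ≤ a)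
    (h : ENNReal.ofReal a ≤ dNormSq d f) : ENNReal.ofReal (√a) ≤ dNorm d f := by
  rw [Real.sqrt_eq_rpow, ← ENNReal.ofReal_rpow_of_nonneg ha (by norm_num)]
  exact ENNReal.rpow_le_rpow h (by norm_num)

end Norms

lemma log_natCast_le_three_mul {N n : ℕ} (hn : 0 < n) (hN : N < 3 * 2 ^ n) :
    Real.log N ≤ 3 * n := by
  rcases N.eq_zero_or_pos with rfl | hpos
  · simp
  have hn' : (1 : ℝ) ≤ n := by exact_mod_cast hn
  have hle : (N : ℝ) ≤ 2 ^ (n + 2) := by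
    have : N ≤ 2 ^ (n + 2) := by rw [pow_add]; omega
    exact_mod_cast this
  calc Real.log N ≤ Real.log (2 ^ (n + 2)) := Real.log_le_log (by positivity) hle
    _ = (n + 2) * Real.log 2 := by rw [Real.log_pow]; push_cast; rfl
    _ ≤ (n + 2) * 1 := by gcongr; linarith [Real.log_two_lt_d9]
    _ ≤ 3 * n := by linarith

lemma exists_le_dNorm_discSeq {d : ℕ} (hd : 0 < d) :
    ∃ c : ℝ, 0 < c ∧ ∀ (S : ℕ → Fin d → ℝ) (K : ℕ), 0 < K →
      ∃ N : ℕ, N ∈ Finset.Ico (2 ^ (d * K)) (3 * 2 ^ (d * K)) ∧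
        ENNReal.ofReal (c * Real.log N ^ ((d : ℝ) / 2) / N) ≤ dNorm d (discSeq d S N) := by
  set a : ℝ := 1 / (4 * 16 ^ (d + 1) * (3 * d) ^ d) with ha
  have ha_pos : 0 < a := by positivity
  refine ⟨√a, Real.sqrt_pos.2 ha_pos, fun S K hK => ?_⟩
  obtain ⟨N, hN, henergy⟩ := exists_le_sum_levelEnergy_discSeq hd S K
  refine ⟨N, hN, ?_⟩
  have hN_pos : 0 < N := (Nat.two_pow_pos _).trans_le (Finset.mem_Ico.1 hN).1
  have hlog_nonneg : 0 ≤ Real.log N := Real.log_natCast_nonneg N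
  have hlog : Real.log N ≤ 3 * d * K := by
    have := log_natCast_le_three_mul (Nat.mul_pos hd hK) (Finset.mem_Ico.1 hN).2
    push_cast at this
    linarith
  have hsq : a * Real.log N ^ d / N ^ 2 ≤
      ∑ j ∈ Fintype.piFinset fun _ : Fin d => Finset.Icc 1 K, levelEnergy d (discSeq d S N) j := by
    rw [div_le_iff₀' (by positivity)]
    calc a * Real.log N ^ d ≤ a * (3 * d * K) ^ d := by gcongr
      _ = K ^ d / (4 * 16 ^ (d + 1)) := by rw [ha, mul_pow (3 * (d : ℝ))]; field_simp
      _ ≤ _ := henergy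
  have hsqrt : √(a * Real.log N ^ d / N ^ 2) = √a * Real.log N ^ ((d : ℝ) / 2) / N := by
    rw [Real.sqrt_div' _ (by positivity), Real.sqrt_mul ha_pos.le, Real.sqrt_sq (by positivity),
      Real.sqrt_eq_rpow (_ ^ d), ← Real.rpow_natCast, ← Real.rpow_mul hlog_nonneg, mul_one_div]
  rw [← hsqrt]
  exact ofReal_sqrt_le_dNorm (by positivity)
    ((ENNReal.ofReal_le_ofReal hsq).trans (ofReal_sum_levelEnergy_le_dNormSq _ _))

theorem bmo_discrepancy_lower_bound_general {d : ℕ} (hd : 0 < d) :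
    ∃ c : ℝ, 0 < c ∧ ∀ S : ℕ → Fin d → ℝ,
      {N : ℕ | ENNReal.ofReal (c * Real.log N ^ ((d : ℝ) / 2) / N) ≤
        bmoNorm d (discSeq d S N)}.Infinite := by
  obtain ⟨c, hc, hbound⟩ := exists_le_dNorm_discSeq hd
  refine ⟨c, hc, fun S => Set.infinite_of_forall_exists_gt fun R => ?_⟩
  obtain ⟨N, hN, hle⟩ := hbound S (R + 1) R.succ_pos
  refine ⟨N, hle.trans (dNorm_le_bmoNorm _), ?_⟩
  calc R < R + 1 := R.lt_succ_self
    _ ≤ d * (R + 1) := Nat.le_mul_of_pos_left _ hd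
    _ < 2 ^ (d * (R + 1)) := Nat.lt_two_pow_self
    _ ≤ N := (Finset.mem_Ico.1 hN).1

/-- For every dimension `d` there is `c_d > 0` such that for every infinite
sequence `S` in `[0,1)^d` one has `‖D_S^N | bmo^d‖ ≥ c_d · N⁻¹ (log N)^{d/2}` for infinitely
many `N`. -/
theorem bmo_discrepancy_lower_bound (d : ℕ) (hd : 0 < d) :
    ∃ c : ℝ, 0 < c ∧ ∀ S : ℕ → Fin d → ℝ, (∀ k, S k ∈ unitCubeIco d) →
      {N : ℕ | ENNReal.ofReal (c * Real.log N ^ ((d:ℝ)/2) / N) ≤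
        bmoNorm d (discSeq d S N)}.Infinite := by
  obtain ⟨c, hc, hinf⟩ := bmo_discrepancy_lower_bound_general hd
  exact ⟨c, hc, fun S _ => hinf S⟩

end
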